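/- arXiv:1609.04943 — 2 statements merged into one kernel-verified Lean document; each statement's English description precedes it below -/
import Mathlib

section
/- Let (Ω,Σ,μ) be a probability space and φ : Ω → Ω a measure-preserving measurable transformation with Perron–Frobenius operator P on L¹(Ω,Σ,μ). Then the following are equivalent: (i) P is exact, i.e., for every f ∈ L¹(Ω,Σ,μ) the sequence Pⁿf converges in L¹-norm to the constant function (∫_Ω f dμ)·1; (ii) for every B ∈ Σ one has lim_{n→∞} sup_{A∈Σ} | μ(φ⁻ⁿ(A) ∩ B) − μ(A)μ(B) | = 0; (iii) for every B ∈ Σ there exists D ∈ Σ with μ(D) > 0 such that lim_{n→∞} sup_{A∈Σ, A⊆D} | μ(φ⁻ⁿ(A) ∩ B) − μ(A)μ(B) | = 0. -/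
open MeasureTheory Filter Set Topology
open scoped symmDiff ENNReal

/-- Projections on a decreasing sequence of closed subspaces converge. -/
lemma aux_proj {E : Type*} [NormedAddCommGroup E] [InnerProductSpace ℝ E] [CompleteSpace E]
    (V : ℕ → Submodule ℝ E) [∀ n, (V n).HasOrthogonalProjection]
    (hc : ∀ n, IsClosed (V n : Set E)) (hV : Antitone V) (x : E) :
    ∃ g : E, Tendsto (fun n => (V n).starProjection x) atTop (𝓝 g) ∧ ∀ n, g ∈ V n := by
  have h := Submodule.starProjection_tendsto_closure_iSup (fun n => (V n)ᗮ)
    (fun a b hab => Submodule.orthogonal_le (hV hab)) x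
  have h2 := (tendsto_const_nhds (x := x)).sub h
  simp only [Submodule.starProjection_orthogonal_val, sub_sub_cancel] at h2
  refine ⟨_, h2, fun n => ?_⟩
  refine (hc n).mem_of_tendsto h2 ?_
  filter_upwards [eventually_ge_atTop n] with k hk
  exact hV hk (Submodule.starProjection_apply_mem _ _)

section
variable {Ω : Type*} [m : MeasurableSpace Ω] {μ : Measure Ω} [IsProbabilityMeasure μ]

lemma aux_term_bound (S A B : Set Ω) :
    |(μ (S ∩ B)).toReal - (μ A).toReal * (μ B).toReal| ≤ 1 := by
  have h (T : Set Ω) : 0 ≤ (μ T).toReal ∧ (μ T).toReal ≤ 1 :=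
    ⟨ENNReal.toReal_nonneg, measureReal_le_one (μ := μ) (s := T)⟩
  have h1 := h (S ∩ B)
  have h2 := h A
  have h3 := h B
  rw [abs_le]
  constructor <;> nlinarith

/-- A set which is a.e. in the tail is trivial under condition (iii). -/
lemma aux_tail {φ : Ω → Ω} (hmp : MeasurePreserving φ μ μ) (B D : Set Ω)
    (hB : MeasurableSet B) (hD : MeasurableSet D) (hD0 : 0 < μ D)
    (hlim : Tendsto (fun n : ℕ => ⨆ A : {A : Set Ω // MeasurableSet A ∧ A ⊆ D},
          |(μ (φ^[n] ⁻¹' (A : Set Ω) ∩ B)).toReal - (μ (A : Set Ω)).toReal * (μ B).toReal|)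
          atTop (𝓝 0))
    (htail : ∀ n : ℕ, ∃ C, MeasurableSet C ∧ B =ᵐ[μ] (φ^[n] ⁻¹' C : Set Ω)) :
    μ B = 0 ∨ μ B = 1 := by
  choose C hC hBC using htail
  have key (A : ℕ → Set Ω) (hA : ∀ n, MeasurableSet (A n)) (hAD : ∀ n, A n ⊆ D) :
      Tendsto (fun n => μ.real (A n ∩ C n) - μ.real (A n) * μ.real B) atTop (𝓝 0) := by
    refine squeeze_zero_norm (fun n => ?_) hlim
    have hb : BddAbove (range fun A : {A : Set Ω // MeasurableSet A ∧ A ⊆ D} =>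
        |(μ (φ^[n] ⁻¹' (A : Set Ω) ∩ B)).toReal - (μ (A : Set Ω)).toReal * (μ B).toReal|) :=
      ⟨1, by rintro _ ⟨A, rfl⟩; exact aux_term_bound _ _ _⟩
    refine le_trans (le_of_eq ?_) (le_ciSup hb ⟨A n, hA n, hAD n⟩)
    have : μ (φ^[n] ⁻¹' (A n) ∩ B) = μ (A n ∩ C n) := by
      rw [measure_congr ((ae_eq_refl _).inter (hBC n)), ← preimage_inter,
        (hmp.iterate n).measure_preimage ((hA n).inter (hC n)).nullMeasurableSet]
    simp [this, Measure.real]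
  have k1 := key (fun n => D ∩ C n) (fun n => hD.inter (hC n)) (fun n => inter_subset_left)
  have k2 := key (fun n => D \ C n) (fun n => hD.diff (hC n)) (fun n => diff_subset)
  simp only [inter_assoc, inter_self] at k1
  simp only [diff_inter_self, measureReal_empty, zero_sub] at k2
  have k3 : Tendsto (fun n : ℕ => μ.real D * ((1 - μ.real B) * μ.real B)) atTop (𝓝 0) := by
    have := (k1.mul_const (μ.real B)).sub (k2.mul_const (1 - μ.real B))
    simp only [zero_mul, sub_zero] at this
    refine this.congr fun n => ?_
    rw [← measureReal_inter_add_diff (μ := μ) (s := D) (hC n)]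
    ring
  have k4 := tendsto_nhds_unique tendsto_const_nhds k3
  have hD' : μ.real D ≠ 0 := (ENNReal.toReal_pos hD0.ne' (measure_ne_top _ _)).ne'
  rcases mul_eq_zero.1 k4 with h | h
  · exact absurd h hD'
  rcases mul_eq_zero.1 h with h | h
  · right
    have : (μ B).toReal = 1 := by simp only [Measure.real] at h; linarith
    rwa [ENNReal.toReal_eq_one_iff] at this
  · left
    simpa [Measure.real, ENNReal.toReal_eq_zero_iff] using h

lemma aux_const (g : Ω → ℝ) (hg : Integrable g μ)
    (h : ∀ c : ℝ, μ {x | c < g x} = 0 ∨ μ {x | c < g x} = 1)  :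
    g =ᵐ[μ] fun _ => ∫ x, g x ∂μ := by
  set c := ∫ x, g x ∂μ with hcdef
  have hi : Integrable (fun x => g x - c) μ := hg.sub (integrable_const c)
  have h0 : ∫ x, (g x - c) ∂μ = 0 := by
    rw [integral_sub hg (integrable_const c)]; simp [← hcdef]
  have hms : NullMeasurableSet {x | c < g x} μ :=
    nullMeasurableSet_lt aemeasurable_const hg.aemeasurable
  rcases h c with h | h
  · have hle : ∀ᵐ x ∂μ, g x ≤ c := by
      rw [ae_iff]; simpa using h
    have h1 : ∫ x, (c - g x) ∂μ = 0 := by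
      rw [integral_sub (integrable_const c) hg]; simp [← hcdef]
    have := (integral_eq_zero_iff_of_nonneg_ae
      (by filter_upwards [hle] with x hx; simpa using hx) ((integrable_const c).sub hg)).1 h1
    filter_upwards [this] with x hx
    simp only [Pi.zero_apply, Pi.sub_apply] at hx
    linarith
  · have hlt : ∀ᵐ x ∂μ, c < g x := (prob_compl_eq_zero_iff₀ hms).2 h
    have := (integral_eq_zero_iff_of_nonneg_ae
      (by filter_upwards [hlt] with x hx; simpa using hx.le) hi).1 h0
    filter_upwards [this] with x hx
    simp only [Pi.zero_apply] at hx
    linarith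

lemma aux_iii_ii {φ : Ω → Ω} (hmp : MeasurePreserving φ μ μ)
    (H : ∀ B : Set Ω, MeasurableSet B → ∃ D : Set Ω, MeasurableSet D ∧ 0 < μ D ∧
        Tendsto (fun n : ℕ => ⨆ A : {A : Set Ω // MeasurableSet A ∧ A ⊆ D},
          |(μ (φ^[n] ⁻¹' (A : Set Ω) ∩ B)).toReal - (μ (A : Set Ω)).toReal * (μ B).toReal|)
          atTop (𝓝 0)) (B : Set Ω) (hB : MeasurableSet B) :
    Tendsto (fun n : ℕ => ⨆ A : {A : Set Ω // MeasurableSet A},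
          |(μ (φ^[n] ⁻¹' (A : Set Ω) ∩ B)).toReal - (μ (A : Set Ω)).toReal * (μ B).toReal|)
          atTop (𝓝 0) := by
  have hm : ∀ n : ℕ, m.comap (φ^[n]) ≤ m := fun n => (hmp.measurable.iterate n).comap_le
  have hfact : ∀ n : ℕ, Fact (m.comap (φ^[n]) ≤ m) := fun n => ⟨hm n⟩
  let V : ℕ → Submodule ℝ (Lp ℝ 2 μ) := fun n => lpMeas ℝ ℝ (m.comap (φ^[n])) 2 μ
  have hcomp : ∀ n, CompleteSpace (V n) := fun n =>
    inferInstanceAs (CompleteSpace (lpMeas ℝ ℝ (m.comap (φ^[n])) 2 μ))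
  have hclosed : ∀ n, IsClosed (V n : Set (Lp ℝ 2 μ)) := fun n =>
    (completeSpace_coe_iff_isComplete.1 (hcomp n)).isClosed
  have hanti : Antitone V := by
    refine antitone_nat_of_succ_le fun n f hf => ?_
    rw [mem_lpMeas_iff_aestronglyMeasurable] at hf ⊢
    refine hf.mono ?_
    rw [Function.iterate_succ', ← MeasurableSpace.comap_comp]
    exact MeasurableSpace.comap_mono hmp.measurable.comap_le
  let I : ∀ S : Set Ω, MeasurableSet S → Lp ℝ 2 μ := fun S hS =>
    indicatorConstLp 2 hS (measure_ne_top μ S) (1 : ℝ)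
  obtain ⟨g, hgl, hgV⟩ := aux_proj V hclosed hanti (I B hB)
  have hgi : Integrable g μ := (Lp.memLp g).integrable (by norm_num)
  -- inner product of an indicator in `V n` with the projection
  have hproj (n : ℕ) (A : Set Ω) (hA : MeasurableSet A) :
      inner ℝ (I (φ^[n] ⁻¹' A) (hmp.measurable.iterate n hA)) ((V n).starProjection (I B hB))
        = μ.real (φ^[n] ⁻¹' A ∩ B) := by
    have hmem : I (φ^[n] ⁻¹' A) (hmp.measurable.iterate n hA) ∈ V n :=
      mem_lpMeas_indicatorConstLp (hm n) ⟨A, hA, rfl⟩ (measure_ne_top _ _)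
    rw [← Submodule.inner_starProjection_left_eq_right,
      Submodule.starProjection_eq_self_iff.2 hmem]
    exact L2.real_inner_indicatorConstLp_one_indicatorConstLp_one _ _ _ _
  have hgint : ∫ x, g x ∂μ = μ.real B := by
    have h1 : Tendsto (fun n => inner ℝ (I univ .univ) ((V n).starProjection (I B hB)))
        atTop (𝓝 (inner ℝ (I univ .univ) g)) := tendsto_const_nhds.inner hgl
    have h2 : ∀ n, inner ℝ (I univ .univ) ((V n).starProjection (I B hB)) = μ.real B := by
      intro n
      have := hproj n univ .univ
      simpa using this
    simp only [h2] at h1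
    have h3 := tendsto_nhds_unique h1 tendsto_const_nhds
    rw [← h3]
    have h4 := L2.inner_indicatorConstLp_one (𝕜 := ℝ) .univ (measure_ne_top μ univ) g
    rw [setIntegral_univ] at h4
    exact h4.symm
  have hgc : g =ᵐ[μ] fun _ => μ.real B := by
    rw [← hgint]
    refine aux_const g hgi fun c => ?_
    have hgm : Measurable g := (Lp.stronglyMeasurable g).measurable
    have hBc : MeasurableSet {x | c < g x} := measurableSet_lt measurable_const hgm
    obtain ⟨D, hD, hD0, hlim⟩ := H _ hBc
    refine aux_tail hmp _ D hBc hD hD0 hlim fun n => ?_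
    have hn := hgV n
    rw [mem_lpMeas_iff_aestronglyMeasurable] at hn
    obtain ⟨g', hg', hgg'⟩ := hn
    obtain ⟨C, hC, hCe⟩ : MeasurableSet[m.comap (φ^[n])] {x | c < g' x} :=
      hg'.measurable measurableSet_Ioi
    refine ⟨C, hC, ?_⟩
    rw [hCe]
    filter_upwards [hgg'] with x hx
    change (c < g x) = (c < g' x)
    rw [hx]
  have hbound : Tendsto (fun n => ‖(V n).starProjection (I B hB) - g‖) atTop (𝓝 0) :=
    tendsto_iff_norm_sub_tendsto_zero.1 hgl
  refine squeeze_zero (fun n => Real.iSup_nonneg fun _ => abs_nonneg _) (fun n => ?_) hbound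
  haveI : Nonempty {A : Set Ω // MeasurableSet A} := ⟨⟨∅, .empty⟩⟩
  refine ciSup_le fun ⟨A, hA⟩ => ?_
  have hS := hmp.measurable.iterate n hA
  have e1 := hproj n A hA
  have e2 : inner ℝ (I (φ^[n] ⁻¹' A) hS) g = μ.real A * μ.real B := by
    rw [L2.inner_indicatorConstLp_one (𝕜 := ℝ) hS, setIntegral_congr_ae hS
      (hgc.mono fun x hx _ => hx)]
    simp [Measure.real, (hmp.iterate n).measure_preimage hA.nullMeasurableSet]
  change |μ.real (φ^[n] ⁻¹' A ∩ B) - μ.real A * μ.real B| ≤ _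
  rw [← e1, ← e2, ← inner_sub_right]
  refine (abs_real_inner_le_norm _ _).trans ?_
  refine mul_le_of_le_one_left (norm_nonneg _) ?_
  refine norm_indicatorConstLp_le.trans ?_
  simp only [norm_one, one_mul]
  exact Real.rpow_le_one measureReal_nonneg measureReal_le_one (by positivity)

lemma aux_norm (g : Lp ℝ 1 μ) : ∃ A : Set Ω, MeasurableSet A ∧
    ‖g‖ = ∫ x in A, g x ∂μ - ∫ x in Aᶜ, g x ∂μ := by
  have hgm : Measurable g := (Lp.stronglyMeasurable g).measurable
  have hgi : Integrable g μ := L1.integrable_coeFn g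
  have hA : MeasurableSet {x | 0 ≤ g x} := measurableSet_le measurable_const hgm
  refine ⟨_, hA, ?_⟩
  rw [L1.norm_eq_integral_norm, ← integral_add_compl hA hgi.norm, sub_eq_add_neg, ← integral_neg]
  congr 1
  · exact setIntegral_congr_fun hA fun x hx => by
      simpa using hx
  · refine setIntegral_congr_fun hA.compl fun x hx => ?_
    simp only [mem_compl_iff, mem_ofPred_eq, not_le] at hx
    simp [abs_of_neg hx]

lemma aux_setint_le (g : Lp ℝ 1 μ) (A : Set Ω) : |∫ x in A, g x ∂μ| ≤ ‖g‖ := by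
  rw [L1.norm_eq_integral_norm]
  have hgi : Integrable g μ := L1.integrable_coeFn g
  refine (norm_integral_le_integral_norm (μ := μ.restrict A) g).trans ?_
  exact setIntegral_le_integral hgi.norm (Eventually.of_forall fun x => norm_nonneg _)

variable {φ : Ω → Ω} {P : Lp ℝ 1 μ →L[ℝ] Lp ℝ 1 μ}

lemma aux_iter (hmp : MeasurePreserving φ μ μ)
    (hP : ∀ (f : Lp ℝ 1 μ) (A : Set Ω), MeasurableSet A →
      ∫ x in A, (P f) x ∂μ = ∫ x in φ ⁻¹' A, f x ∂μ) (f : Lp ℝ 1 μ) (n : ℕ) :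
    ∀ (A : Set Ω), MeasurableSet A →
      ∫ x in A, ((P ^ n) f) x ∂μ = ∫ x in φ^[n] ⁻¹' A, f x ∂μ := by
  induction n with
  | zero => intro A _; simp
  | succ n ih =>
    intro A hA
    rw [pow_succ', ContinuousLinearMap.mul_apply, hP _ _ hA, ih _ (hmp.measurable hA),
      Function.iterate_succ', preimage_comp]

lemma aux_contr (hmp : MeasurePreserving φ μ μ)
    (hP : ∀ (f : Lp ℝ 1 μ) (A : Set Ω), MeasurableSet A →
      ∫ x in A, (P f) x ∂μ = ∫ x in φ ⁻¹' A, f x ∂μ) (f : Lp ℝ 1 μ) (n : ℕ) :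
    ‖(P ^ n) f‖ ≤ ‖f‖ := by
  obtain ⟨A, hA, h⟩ := aux_norm ((P ^ n) f)
  have hgi : Integrable f μ := L1.integrable_coeFn f
  rw [h, aux_iter hmp hP f n A hA, aux_iter hmp hP f n _ hA.compl, preimage_compl,
    L1.norm_eq_integral_norm, ← integral_add_compl (hmp.measurable.iterate n hA) hgi.norm]
  have h1 := (le_abs_self _).trans
    (norm_integral_le_integral_norm (μ := μ.restrict (φ^[n] ⁻¹' A)) f)
  have h2 := (neg_abs_le _).trans' (neg_le_neg
    (norm_integral_le_integral_norm (μ := μ.restrict (φ^[n] ⁻¹' A)ᶜ) f))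
  linarith

/-- The deviation `Pⁿ f - ∫ f`. -/
noncomputable def auxQ (P : Lp ℝ 1 μ →L[ℝ] Lp ℝ 1 μ) (n : ℕ) (f : Lp ℝ 1 μ) : Lp ℝ 1 μ :=
  (P ^ n) f - Lp.const 1 μ (∫ x, f x ∂μ)

lemma auxQ_add (n : ℕ) (f g : Lp ℝ 1 μ) : auxQ P n (f + g) = auxQ P n f + auxQ P n g := by
  have : ∫ x, (f + g : Lp ℝ 1 μ) x ∂μ = ∫ x, f x ∂μ + ∫ x, g x ∂μ := by
    rw [integral_congr_ae (Lp.coeFn_add f g)]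
    exact integral_add (L1.integrable_coeFn f) (L1.integrable_coeFn g)
  rw [auxQ, this, map_add, map_add, auxQ, auxQ]
  abel

lemma auxQ_norm_le (hmp : MeasurePreserving φ μ μ)
    (hP : ∀ (f : Lp ℝ 1 μ) (A : Set Ω), MeasurableSet A →
      ∫ x in A, (P f) x ∂μ = ∫ x in φ ⁻¹' A, f x ∂μ) (f : Lp ℝ 1 μ) (n : ℕ) :
    ‖auxQ P n f‖ ≤ 2 * ‖f‖ := by
  have h1 := aux_contr hmp hP f n
  have h2 : ‖Lp.const 1 μ (∫ x, f x ∂μ)‖ ≤ ‖f‖ := by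
    refine (Lp.norm_const_le (μ := μ) (p := 1) (c := ∫ x, f x ∂μ)).trans ?_
    simpa using aux_setint_le f univ
  have := norm_sub_le ((P ^ n) f) (Lp.const 1 μ (∫ x, f x ∂μ))
  rw [auxQ]
  linarith

lemma auxQ_setint (hmp : MeasurePreserving φ μ μ)
    (hP : ∀ (f : Lp ℝ 1 μ) (A : Set Ω), MeasurableSet A →
      ∫ x in A, (P f) x ∂μ = ∫ x in φ ⁻¹' A, f x ∂μ) (c : ℝ) (B : Set Ω) (hB : MeasurableSet B)
      (n : ℕ) (A : Set Ω) (hA : MeasurableSet A) :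
    ∫ x in A, auxQ P n (indicatorConstLp 1 hB (measure_ne_top μ B) c) x ∂μ
      = c * (μ.real (φ^[n] ⁻¹' A ∩ B) - μ.real A * μ.real B) := by
  have h1 := Lp.coeFn_sub ((P ^ n) (indicatorConstLp 1 hB (measure_ne_top μ B) c))
    (Lp.const 1 μ (∫ x, indicatorConstLp 1 hB (measure_ne_top μ B) c x ∂μ))
  have h2 := Lp.coeFn_const (p := 1) (μ := μ)
    (c := ∫ x, indicatorConstLp 1 hB (measure_ne_top μ B) c x ∂μ)
  have h3 : auxQ P n (indicatorConstLp 1 hB (measure_ne_top μ B) c) =ᵐ[μ] fun x =>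
     (P ^ n) (indicatorConstLp 1 hB (measure_ne_top μ B) c) x -
      ∫ x, indicatorConstLp 1 hB (measure_ne_top μ B) c x ∂μ := by
    filter_upwards [h1, h2] with x hx hx2
    rw [auxQ, hx, Pi.sub_apply, hx2, Function.const_apply]
  rw [setIntegral_congr_ae hA (h3.mono fun x hx _ => hx), integral_sub
    (L1.integrable_coeFn _).integrableOn (integrable_const _), aux_iter hmp hP _ n A hA,
    setIntegral_indicatorConstLp (hmp.measurable.iterate n hA) hB, integral_indicatorConstLp]
  simp [inter_comm]
  ring

lemma auxQ_eLpNorm (n : ℕ) (f : Lp ℝ 1 μ) :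
    eLpNorm (((P ^ n) f : Ω → ℝ) - fun _ => ∫ x, f x ∂μ) 1 μ = ENNReal.ofReal ‖auxQ P n f‖ := by
  rw [Lp.norm_def, ENNReal.ofReal_toReal (Lp.eLpNorm_ne_top _)]
  refine eLpNorm_congr_ae ?_
  have h1 := Lp.coeFn_sub ((P ^ n) f) (Lp.const 1 μ (∫ x, f x ∂μ))
  have h2 := Lp.coeFn_const (p := 1) (μ := μ) (c := ∫ x, f x ∂μ)
  filter_upwards [h1, h2] with x hx hx2
  rw [auxQ, hx, Pi.sub_apply, Pi.sub_apply, hx2, Function.const_apply]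

lemma auxQ_tendsto (f : Lp ℝ 1 μ) :
    Tendsto (fun n : ℕ => eLpNorm (((P ^ n) f : Ω → ℝ) - fun _ => ∫ x, f x ∂μ) 1 μ) atTop (𝓝 0)
      ↔ Tendsto (fun n : ℕ => ‖auxQ P n f‖) atTop (𝓝 0) := by
  simp only [auxQ_eLpNorm]
  constructor
  · intro h
    have := (ENNReal.tendsto_toReal ENNReal.zero_ne_top).comp h
    simpa [Function.comp_def] using this
  · intro h
    simpa using ENNReal.tendsto_ofReal h

end

theorem stmt5 {Ω : Type*} [m : MeasurableSpace Ω] (μ : Measure Ω) [IsProbabilityMeasure μ]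
    (φ : Ω → Ω) (hmp : MeasurePreserving φ μ μ)
    (P : Lp ℝ 1 μ →L[ℝ] Lp ℝ 1 μ)
    (hP : ∀ (f : Lp ℝ 1 μ) (A : Set Ω), MeasurableSet A →
      ∫ x in A, (P f) x ∂μ = ∫ x in φ ⁻¹' A, f x ∂μ) :
    ((∀ f : Lp ℝ 1 μ,
        Tendsto (fun n : ℕ =>
          eLpNorm (((P ^ n) f : Ω → ℝ) - fun _ => ∫ x, f x ∂μ) 1 μ) atTop (𝓝 0)) ↔
      (∀ B : Set Ω, MeasurableSet B →
        Tendsto (fun n : ℕ => ⨆ A : {A : Set Ω // MeasurableSet A},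
          |(μ (φ^[n] ⁻¹' (A : Set Ω) ∩ B)).toReal - (μ (A : Set Ω)).toReal * (μ B).toReal|)
          atTop (𝓝 0)))
    ∧ ((∀ B : Set Ω, MeasurableSet B →
        Tendsto (fun n : ℕ => ⨆ A : {A : Set Ω // MeasurableSet A},
          |(μ (φ^[n] ⁻¹' (A : Set Ω) ∩ B)).toReal - (μ (A : Set Ω)).toReal * (μ B).toReal|)
          atTop (𝓝 0)) ↔
      (∀ B : Set Ω, MeasurableSet B → ∃ D : Set Ω, MeasurableSet D ∧ 0 < μ D ∧
        Tendsto (fun n : ℕ => ⨆ A : {A : Set Ω // MeasurableSet A ∧ A ⊆ D},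
          |(μ (φ^[n] ⁻¹' (A : Set Ω) ∩ B)).toReal - (μ (A : Set Ω)).toReal * (μ B).toReal|)
          atTop (𝓝 0))) := by
  refine ⟨⟨fun h B hB => ?_, fun h f => ?_⟩, ⟨fun h B hB => ⟨univ, .univ, by simp, ?_⟩,
    fun h B hB => aux_iii_ii hmp h B hB⟩⟩
  · have h1 := (auxQ_tendsto _).1 (h (indicatorConstLp 1 hB (measure_ne_top μ B) 1))
    refine squeeze_zero (fun n => Real.iSup_nonneg fun _ => abs_nonneg _) (fun n => ?_) h1
    haveI : Nonempty {A : Set Ω // MeasurableSet A} := ⟨⟨∅, .empty⟩⟩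
    refine ciSup_le fun ⟨A, hA⟩ => ?_
    have h2 := aux_setint_le (auxQ P n (indicatorConstLp 1 hB (measure_ne_top μ B) 1)) A
    rwa [auxQ_setint hmp hP 1 B hB n A hA, one_mul] at h2
  · rw [auxQ_tendsto]
    induction f using Lp.induction ENNReal.one_ne_top with
    | indicatorConst c hs hμs =>
      rename_i B
      rw [Lp.simpleFunc.coe_indicatorConst]
      have h1 := (h B hs).const_mul (2 * |c|)
      rw [mul_zero] at h1
      refine squeeze_zero (fun n => norm_nonneg _) (fun n => ?_) h1
      have hb : BddAbove (range fun A : {A : Set Ω // MeasurableSet A} =>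
        |(μ (φ^[n] ⁻¹' (A : Set Ω) ∩ B)).toReal - (μ (A : Set Ω)).toReal * (μ B).toReal|) :=
        ⟨1, by rintro _ ⟨A, rfl⟩; exact aux_term_bound _ _ _⟩
      obtain ⟨A, hA, hn⟩ := aux_norm (auxQ P n (indicatorConstLp 1 hs (measure_ne_top μ B) c))
      rw [hn, auxQ_setint hmp hP c B hs n A hA, auxQ_setint hmp hP c B hs n _ hA.compl]
      have b1 := le_ciSup hb ⟨A, hA⟩
      have b2 := le_ciSup hb ⟨Aᶜ, hA.compl⟩
      have c1 := mul_le_mul_of_nonneg_left b1 (abs_nonneg c)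
      have c2 := mul_le_mul_of_nonneg_left b2 (abs_nonneg c)
      rw [← abs_mul] at c1 c2
      have d1 := (le_abs_self _).trans c1
      have d2 := (neg_le_abs _).trans c2
      simp only [Measure.real]
      linarith
    | add hf hg hd ihf ihg =>
      refine squeeze_zero (fun n => norm_nonneg _) (fun n => ?_) (by simpa using ihf.add ihg)
      rw [auxQ_add]
      exact norm_add_le _ _
    | isClosed =>
      refine isClosed_of_closure_subset fun f hf => ?_
      rw [mem_ofPred_eq, Metric.tendsto_atTop]
      intro ε hε
      obtain ⟨g, hg, hfg⟩ := Metric.mem_closure_iff.1 hf (ε / 4) (by positivity)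
      obtain ⟨N, hN⟩ := Metric.tendsto_atTop.1 hg (ε / 2) (by positivity)
      refine ⟨N, fun n hn => ?_⟩
      have e1 := hN n hn
      simp only [dist_zero_right, norm_norm] at e1 ⊢
      have e2 : auxQ P n f = auxQ P n g + auxQ P n (f - g) := by
        rw [← auxQ_add]; simp
      have e3 := auxQ_norm_le hmp hP (f - g) n
      rw [dist_eq_norm] at hfg
      rw [e2]
      have := norm_add_le (auxQ P n g) (auxQ P n (f - g))
      linarith
  · refine squeeze_zero (fun n => Real.iSup_nonneg fun _ => abs_nonneg _) (fun n => ?_) (h B hB)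
    haveI : Nonempty {A : Set Ω // MeasurableSet A ∧ A ⊆ univ} := ⟨⟨∅, .empty, by simp⟩⟩
    have hb : BddAbove (range fun A : {A : Set Ω // MeasurableSet A} =>
        |(μ (φ^[n] ⁻¹' (A : Set Ω) ∩ B)).toReal - (μ (A : Set Ω)).toReal * (μ B).toReal|) :=
        ⟨1, by rintro _ ⟨A, rfl⟩; exact aux_term_bound _ _ _⟩
    exact ciSup_le fun ⟨A, hA⟩ => le_ciSup hb ⟨A, hA.1⟩
end

section
/- Let (Ω,Σ,μ) be a probability space and φ : Ω → Ω a measure-preserving measurable transformation with Perron–Frobenius operator P on L¹(Ω,Σ,μ). Suppose that (Pⁿf) converges in L¹-norm for every f ∈ L¹(Ω,Σ,μ). Then for every A ∈ Σ, choosing Σ-measurable representatives f_n of Pⁿ(1_A) and a Σ_inv-measurable representative g of E(1_A | Σ_inv), one has μ( {f_n > 0} Δ {g > 0} ) → 0 as n → ∞; that is, the supports of Pⁿ(1_A) converge in the measure algebra to the support of E(1_A | Σ_inv). -/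
open MeasureTheory Filter Set Topology
open scoped symmDiff ENNReal

/-- The σ-algebra of `φ`-invariant measurable sets. -/
def invAlg {Ω : Type*} (m : MeasurableSpace Ω) (φ : Ω → Ω) : MeasurableSpace Ω where
  MeasurableSet' A := m.MeasurableSet' A ∧ φ ⁻¹' A = A
  measurableSet_empty := ⟨m.measurableSet_empty, rfl⟩
  measurableSet_compl A hA := ⟨m.measurableSet_compl A hA.1, by
    rw [Set.preimage_compl, hA.2]⟩
  measurableSet_iUnion s hs := ⟨m.measurableSet_iUnion s fun i => (hs i).1, by
    simp only [Set.preimage_iUnion]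
    exact Set.iUnion_congr fun i => (hs i).2⟩

lemma aux_abscont {Ω : Type*} [m : MeasurableSpace Ω] (ρ ν : Measure Ω) [IsFiniteMeasure ρ]
    [IsFiniteMeasure ν] (h : ρ ≪ ν) (s : ℕ → Set Ω)
    (hs : Tendsto (fun n => ν (s n)) atTop (𝓝 0)) : Tendsto (fun n => ρ (s n)) atTop (𝓝 0) := by
  have h1 : ∫⁻ x, ρ.rnDeriv ν x ∂ν ≠ ∞ := (Measure.lintegral_rnDeriv_lt_top ρ ν).ne
  have h2 := tendsto_setLIntegral_zero h1 hs
  refine h2.congr fun n => ?_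
  exact Measure.setLIntegral_rnDeriv h (s n)

lemma aux_pow {Ω : Type*} [m : MeasurableSpace Ω] (μ : Measure Ω)
    (φ : Ω → Ω) (hφ : Measurable φ)
    (P : Lp ℝ 1 μ →L[ℝ] Lp ℝ 1 μ)
    (hP : ∀ (f : Lp ℝ 1 μ) (A : Set Ω), MeasurableSet A →
      ∫ x in A, (P f) x ∂μ = ∫ x in φ ⁻¹' A, f x ∂μ) (f : Lp ℝ 1 μ) (n : ℕ) :
    ∀ (A : Set Ω), MeasurableSet A →
      ∫ x in A, ((P ^ n) f) x ∂μ = ∫ x in (φ^[n]) ⁻¹' A, f x ∂μ := by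
  induction n with
  | zero => intro A hA; simp
  | succ n ih =>
    intro A hA
    rw [pow_succ']
    change ∫ x in A, (P ((P ^ n) f)) x ∂μ = _
    rw [hP _ A hA, ih _ (hφ hA), ← Set.preimage_comp, Function.iterate_succ']

lemma aux_nonneg_null {Ω : Type*} [m : MeasurableSpace Ω] (μ : Measure Ω) (f : Ω → ℝ)
    (hf : Integrable f μ) (h0 : 0 ≤ᵐ[μ] f) (B : Set Ω) (hB : MeasurableSet B)
    (hI : ∫ x in B, f x ∂μ = 0) : ∀ᵐ x ∂μ, x ∈ B → f x = 0 := by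
  have := (setIntegral_eq_zero_iff_of_nonneg_ae (ae_restrict_of_ae h0) hf.integrableOn).1 hI
  exact (ae_restrict_iff' hB).1 this

theorem stmt15 {Ω : Type*} [m : MeasurableSpace Ω] (μ : Measure Ω) [IsProbabilityMeasure μ]
    (φ : Ω → Ω) (hmp : MeasurePreserving φ μ μ)
    (P : Lp ℝ 1 μ →L[ℝ] Lp ℝ 1 μ)
    (hP : ∀ (f : Lp ℝ 1 μ) (A : Set Ω), MeasurableSet A →
      ∫ x in A, (P f) x ∂μ = ∫ x in φ ⁻¹' A, f x ∂μ)
    (hconv : ∀ f : Lp ℝ 1 μ, ∃ g : Lp ℝ 1 μ, Tendsto (fun n : ℕ => (P ^ n) f) atTop (𝓝 g))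
    (A : Set Ω) (hA : MeasurableSet A) :
    Tendsto (fun n : ℕ =>
        μ ({x | 0 < ((P ^ n) (indicatorConstLp 1 hA (measure_ne_top μ A) (1 : ℝ))) x}
          ∆ {x | 0 < (μ[A.indicator (fun _ => (1 : ℝ))|invAlg m φ]) x}))
      atTop (𝓝 0) := by
  have hle : invAlg m φ ≤ m := fun s hs => hs.1
  set u : Lp ℝ 1 μ := indicatorConstLp 1 hA (measure_ne_top μ A) (1 : ℝ) with hu
  set g : Ω → ℝ := μ[A.indicator (fun _ => (1 : ℝ))|invAlg m φ] with hg
  have huA : (u : Ω → ℝ) =ᵐ[μ] A.indicator (fun _ => (1 : ℝ)) := indicatorConstLp_coeFn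
  have hAint : Integrable (A.indicator (fun _ => (1 : ℝ))) μ :=
    (integrable_const (1 : ℝ)).indicator hA
  have hu0 : 0 ≤ᵐ[μ] (u : Ω → ℝ) := by
    filter_upwards [huA] with x hx
    rw [hx]
    exact Set.indicator_nonneg (fun _ _ => zero_le_one) x
  have hpow := aux_pow μ φ hmp.measurable P hP u
  have hint : ∀ f : Lp ℝ 1 μ, Integrable (f : Ω → ℝ) μ := fun f => L1.integrable_coeFn f
  have hpre : ∀ (B : Set Ω), φ ⁻¹' B = B → ∀ n, (φ^[n]) ⁻¹' B = B := by
    intro B hB n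
    induction n with
    | zero => rfl
    | succ n ih => rw [Function.iterate_succ', Set.preimage_comp, hB, ih]
  have hf0 : ∀ n, 0 ≤ᵐ[μ] (((P ^ n) u : Lp ℝ 1 μ) : Ω → ℝ) := by
    intro n
    refine ae_nonneg_of_forall_setIntegral_nonneg (hint _) fun s hs _ => ?_
    rw [hpow n s hs]
    exact setIntegral_nonneg_of_ae hu0
  obtain ⟨h, hh⟩ := hconv u
  have hlim : ∀ s : Set Ω, Tendsto (fun n => ∫ x in s, ((P ^ n) u) x ∂μ) atTop
      (𝓝 (∫ x in s, h x ∂μ)) := fun s => ((continuous_setIntegral s).tendsto h).comp hh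
  have hh0 : 0 ≤ᵐ[μ] (h : Ω → ℝ) := by
    refine ae_nonneg_of_forall_setIntegral_nonneg (hint _) fun s hs _ => ?_
    exact ge_of_tendsto' (hlim s) fun n => setIntegral_nonneg_of_ae (hf0 n)
  have hPh : P h = h := by
    have h1 : Tendsto (fun n : ℕ => (P ^ (n + 1)) u) atTop (𝓝 (P h)) := by
      have := (P.continuous.tendsto h).comp hh
      refine this.congr fun n => ?_
      rw [pow_succ']; rfl
    exact tendsto_nhds_unique h1 (hh.comp (tendsto_add_atTop_nat 1))
  have hhm : Measurable (h : Ω → ℝ) := (Lp.stronglyMeasurable h).measurable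
  set H : Set Ω := {x | 0 < h x} with hH
  have hHm : MeasurableSet H := measurableSet_lt measurable_const hhm
  -- H is a.e. invariant
  have hzero : ∫ x in φ ⁻¹' Hᶜ, h x ∂μ = 0 := by
    rw [← hP h _ hHm.compl, hPh]
    refine integral_eq_zero_of_ae ?_
    rw [EventuallyEq, ae_restrict_iff' hHm.compl]
    filter_upwards [hh0] with x hx hxH
    exact le_antisymm (not_lt.1 hxH) hx
  have hsub : H ≤ᵐ[μ] φ ⁻¹' H := by
    filter_upwards [aux_nonneg_null μ h (hint h) hh0 _ (hmp.measurable hHm.compl) hzero]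
      with x hx hxH
    by_contra hc
    have hxH' : 0 < h x := hxH
    exact hxH'.ne' (hx hc)
  have hHinv : φ ⁻¹' H =ᵐ[μ] H :=
    (ae_eq_of_ae_subset_of_measure_ge hsub (hmp.measure_preimage hHm.nullMeasurableSet).le
      hHm.nullMeasurableSet (measure_ne_top _ _)).symm
  obtain ⟨B, hBm, hBH, hBinv⟩ :=
    hmp.quasiMeasurePreserving.exists_preimage_eq_of_preimage_ae hHm.nullMeasurableSet hHinv
  have hgint : Integrable g μ := integrable_condExp
  have hg0 : 0 ≤ᵐ[μ] g :=
    condExp_nonneg (Eventually.of_forall fun x => Set.indicator_nonneg (fun _ _ => zero_le_one) x)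
  have hgI : ∀ C : Set Ω, MeasurableSet C → φ ⁻¹' C = C → ∀ n,
      ∫ x in C, ((P ^ n) u) x ∂μ = ∫ x in C, g x ∂μ := by
    intro C hC hCi n
    rw [hpow n C hC, hpre C hCi, hg, setIntegral_condExp hle hAint ⟨hC, hCi⟩]
    exact integral_congr_ae (ae_restrict_of_ae huA)
  have hBc : φ ⁻¹' Bᶜ = Bᶜ := by rw [Set.preimage_compl, hBinv]
  have hgB : ∀ᵐ x ∂μ, x ∈ Bᶜ → g x = 0 := by
    refine aux_nonneg_null μ g hgint hg0 _ hBm.compl ?_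
    have h1 : ∫ x in Bᶜ, g x ∂μ = ∫ x in Bᶜ, h x ∂μ :=
      tendsto_nhds_unique (tendsto_const_nhds.congr fun n => (hgI _ hBm.compl hBc n).symm)
        (hlim Bᶜ)
    rw [h1]
    refine integral_eq_zero_of_ae ?_
    rw [EventuallyEq, ae_restrict_iff' hBm.compl]
    filter_upwards [hh0, hBH.mem_iff] with x hx hxB hxc
    have : ¬ 0 < h x := fun hc => hxc (hxB.2 hc)
    exact le_antisymm (not_lt.1 this) hx
  set G : Set Ω := {x | 0 < g x} with hG
  have hgm : Measurable[invAlg m φ] g := stronglyMeasurable_condExp.measurable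
  have hGi : MeasurableSet[invAlg m φ] G := by
    have : G = g ⁻¹' Set.Ioi 0 := rfl
    rw [this]
    exact hgm measurableSet_Ioi
  have hGm : MeasurableSet G := hGi.1
  have hGH : ∀ᵐ x ∂μ, x ∈ G → x ∈ H := by
    filter_upwards [hgB, hBH.mem_iff] with x hx hxB hxG
    by_contra hc
    have hxG' : 0 < g x := hxG
    exact hxG'.ne' (hx fun hb => hc (hxB.1 hb))
  -- S_n ⊆ G a.e.
  have hGc : φ ⁻¹' Gᶜ = Gᶜ := by rw [Set.preimage_compl, hGi.2]
  have hSG : ∀ n, ∀ᵐ x ∂μ, x ∈ Gᶜ → ((P ^ n) u) x = 0 := by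
    intro n
    refine aux_nonneg_null μ _ (hint _) (hf0 n) _ hGm.compl ?_
    rw [hgI _ hGm.compl hGc n]
    refine integral_eq_zero_of_ae ?_
    rw [EventuallyEq, ae_restrict_iff' hGm.compl]
    filter_upwards [hg0] with x hx hxc
    exact le_antisymm (not_lt.1 hxc) hx
  -- main estimate
  let S : ℕ → Set Ω := fun n => {x | 0 < ((P ^ n) u) x}
  have hSm : ∀ n, MeasurableSet (S n) := fun n =>
    measurableSet_lt measurable_const (Lp.stronglyMeasurable _).measurable
  have hk : ∫⁻ x, ENNReal.ofReal (h x) ∂μ ≠ ∞ := (hint h).lintegral_lt_top.ne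
  let ν : Measure Ω := μ.withDensity fun x => ENNReal.ofReal (h x)
  have : IsFiniteMeasure ν := isFiniteMeasure_withDensity hk
  have hac : μ.restrict H ≪ ν := by
    refine Measure.AbsolutelyContinuous.mk fun s hs h0 => ?_
    have h1 := (withDensity_apply_eq_zero (μ := μ) hhm.ennreal_ofReal).1 h0
    rw [Measure.restrict_apply hs]
    refine measure_mono_null ?_ h1
    rintro x ⟨hxs, hxH⟩
    exact ⟨(ENNReal.ofReal_pos.2 hxH).ne', hxs⟩
  have hνT : Tendsto (fun n => ν (G \ S n)) atTop (𝓝 0) := by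
    have he : Tendsto (fun n => edist ((P ^ n) u) h) atTop (𝓝 0) :=
      tendsto_iff_edist_tendsto_0.1 hh
    refine tendsto_of_tendsto_of_tendsto_of_le_of_le tendsto_const_nhds he
      (fun _ => zero_le) fun n => ?_
    have hT : MeasurableSet (G \ S n) := hGm.diff (hSm n)
    change ν (G \ S n) ≤ edist ((P ^ n) u) h
    rw [withDensity_apply _ hT, Lp.edist_def, eLpNorm_one_eq_lintegral_enorm]
    refine le_trans (setLIntegral_mono' hT ?_) (setLIntegral_le_lintegral _ _)
    rintro x ⟨-, hx⟩
    have hx' : ((P ^ n) u) x ≤ 0 := not_lt.1 hx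
    rw [Pi.sub_apply, ← ofReal_norm, Real.norm_eq_abs]
    refine ENNReal.ofReal_le_ofReal ?_
    have := neg_le_abs (((P ^ n) u) x - h x)
    linarith
  have hfin := aux_abscont (μ.restrict H) ν hac _ hνT
  refine tendsto_of_tendsto_of_tendsto_of_le_of_le tendsto_const_nhds hfin
    (fun _ => zero_le) fun n => ?_
  change μ (S n ∆ G) ≤ μ.restrict H (G \ S n)
  rw [Measure.restrict_apply (hGm.diff (hSm n))]
  refine measure_mono_ae ?_
  filter_upwards [hSG n, hGH] with x h1 h2 hx
  rcases hx with ⟨hxS, hxG⟩ | ⟨hxG, hxS⟩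
  · have hxS' : 0 < ((P ^ n) u) x := hxS
    exact absurd (h1 hxG) hxS'.ne'
  · exact ⟨⟨hxG, hxS⟩, h2 hxG⟩
end
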